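/- arXiv:math/9801105 — 2 statements merged into one kernel-verified Lean document; each statement's English description precedes it below -/
import Mathlib

section
/- Let τ ∈ ℂ with Im τ > 0, set p = exp(2iπτ), and let γ₁, γ₂ be real numbers and ξ ∈ ℂ. Then ϑ[γ₁,γ₂](ξ,τ) = exp(iπ·2γ₁γ₂) · exp(iπτγ₁²) · exp(2iπγ₁ξ) · Θ_p(−exp(2iπγ₂) · p^{γ₁+1/2} · exp(2iπξ)), where p^{γ₁+1/2} = exp(2iπτ(γ₁+1/2)). In particular the theta series with characteristics equals, up to the explicit exponential prefactor (−1)^{2γ₁γ₂} p^{γ₁²/2} z^{2γ₁} with z = exp(iπξ), the infinite product Θ_p(−e^{2iπγ₂} p^{γ₁+1/2} z²). -/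
open Complex

/-- The Jacobi theta function with characteristics `(g1, g2)`:
`ϑ[g1,g2](ξ,τ) = ∑_{m∈ℤ} exp(iπ(m+g1)²τ + 2iπ(m+g1)(ξ+g2))`. -/
noncomputable def thetaChar (g1 g2 : ℝ) (xi tau : ℂ) : ℂ :=
  ∑' m : ℤ, Complex.exp ((Real.pi : ℂ) * I * ((m : ℂ) + (g1 : ℂ)) ^ 2 * tau
      + 2 * (Real.pi : ℂ) * I * ((m : ℂ) + (g1 : ℂ)) * (xi + (g2 : ℂ)))

/-- The infinite `q`-Pochhammer product `(z;p)_∞ = ∏_{n≥0} (1 − z pⁿ)`. -/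
noncomputable def qPoch (z p : ℂ) : ℂ := ∏' n : ℕ, (1 - z * p ^ n)

/-- The Jacobi theta function `Θ_p(z) = (z;p)_∞ (p z⁻¹;p)_∞ (p;p)_∞`. -/
noncomputable def jTheta (p z : ℂ) : ℂ := qPoch z p * qPoch (p * z⁻¹) p * qPoch p p

/-!
The theta series is an exponential prefactor times `∑ m, (-z) ^ m * p ^ (m * (m - 1) / 2)`, so the
claim is the Jacobi triple product identity. The latter is the limit `N → ∞` of a finite identity:
in Gauss's `q`-binomial theorem for `(x; q)_{2N}` put `x = z * q ^ (-N)`, so that the product splits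
symmetrically into `(z; q)_N` and, after reversing its order, `(q / z; q)_N`, while the coefficients
`[2N, N + m]_q` stay bounded and tend to `1 / (q; q)_∞`.
-/

open Finset Filter Topology

section GaussBinomial

variable {R : Type*}

/-- The Gaussian binomial coefficient `[n, k]_q`, defined by the `q`-Pascal rule so that it makes
sense without dividing by `1 - q ^ j`. -/
def gaussBinom [Semiring R] (q : R) : ℕ → ℕ → R
  | _, 0 => 1
  | 0, _ + 1 => 0
  | n + 1, k + 1 => gaussBinom q n k + q ^ (k + 1) * gaussBinom q n (k + 1)

@[simp]
lemma gaussBinom_zero_right [Semiring R] (q : R) (n : ℕ) : gaussBinom q n 0 = 1 := by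
  cases n <;> rfl

lemma gaussBinom_succ_succ [Semiring R] (q : R) (n k : ℕ) :
    gaussBinom q (n + 1) (k + 1) = gaussBinom q n k + q ^ (k + 1) * gaussBinom q n (k + 1) :=
  rfl

lemma gaussBinom_eq_zero_of_lt [Semiring R] (q : R) {n k : ℕ} (h : n < k) :
    gaussBinom q n k = 0 := by
  induction n generalizing k with
  | zero => obtain ⟨k, rfl⟩ := Nat.exists_eq_add_one.2 h; rfl
  | succ n ih =>
    obtain ⟨k, rfl⟩ := Nat.exists_eq_add_one.2 (Nat.zero_lt_of_lt h)
    rw [gaussBinom_succ_succ, ih (by lia), ih (by lia), mul_zero, add_zero]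

@[simp]
lemma gaussBinom_self [Semiring R] (q : R) (n : ℕ) : gaussBinom q n n = 1 := by
  induction n with
  | zero => rfl
  | succ n ih => simp [gaussBinom_succ_succ, ih, gaussBinom_eq_zero_of_lt q n.lt_add_one]

theorem prod_one_add_mul_pow_eq_sum_gaussBinom [CommSemiring R] (x q : R) (n : ℕ) :
    ∏ k ∈ range n, (1 + x * q ^ k) =
      ∑ j ∈ range (n + 1), gaussBinom q n j * (q ^ j.choose 2 * x ^ j) := by
  induction n generalizing x with
  | zero => simp
  | succ n ih =>
    have shifted : ∏ k ∈ range n, (1 + x * q ^ (k + 1)) =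
        ∑ j ∈ range (n + 1), q ^ j * gaussBinom q n j * (q ^ j.choose 2 * x ^ j) := by
      calc
        _ = ∏ k ∈ range n, (1 + x * q * q ^ k) := by simp only [pow_succ', mul_assoc]
        _ = _ := (ih (x * q)).trans (sum_congr rfl fun j _ ↦ by ring)
    have reindexed : ∑ j ∈ range (n + 1), q ^ j * gaussBinom q n j * (q ^ j.choose 2 * x ^ j) =
        ∑ j ∈ range (n + 1), q ^ (j + 1) * gaussBinom q n (j + 1) *
          (q ^ (j + 1).choose 2 * x ^ (j + 1)) + 1 := by
      rw [sum_range_succ', sum_range_succ _ n, gaussBinom_eq_zero_of_lt q n.lt_add_one]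
      simp
    have multiplied : (∑ j ∈ range (n + 1), q ^ j * gaussBinom q n j * (q ^ j.choose 2 * x ^ j)) *
        x = ∑ j ∈ range (n + 1), gaussBinom q n j * (q ^ (j + 1).choose 2 * x ^ (j + 1)) := by
      rw [sum_mul]
      refine sum_congr rfl fun j _ ↦ ?_
      rw [Nat.choose_succ_succ' j 1, Nat.choose_one_right]
      ring
    rw [prod_range_succ', shifted, pow_zero, mul_one, mul_add, mul_one, multiplied, reindexed,
      sum_range_succ' _ (n + 1)]
    simp only [gaussBinom_succ_succ, gaussBinom_zero_right, add_mul, sum_add_distrib,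
      Nat.choose_zero_succ, pow_zero, mul_one]
    ring

end GaussBinomial

section FiniteQPochhammer

variable {R : Type*} [CommRing R]

/-- The finite `q`-Pochhammer symbol `(z; q)_n`, whose limit as `n → ∞` is `qPoch z q`. -/
def finiteQPoch (z q : R) (n : ℕ) : R :=
  ∏ k ∈ range n, (1 - z * q ^ k)

lemma finiteQPoch_succ (z q : R) (n : ℕ) :
    finiteQPoch z q (n + 1) = finiteQPoch z q n * (1 - z * q ^ n) :=
  prod_range_succ _ _

lemma finiteQPoch_add (z q : R) (m n : ℕ) :
    finiteQPoch z q (m + n) = finiteQPoch z q m * finiteQPoch (z * q ^ m) q n := by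
  simp only [finiteQPoch, prod_range_add, pow_add, mul_assoc]

theorem gaussBinom_mul_finiteQPoch_mul_finiteQPoch (q : R) (a b : ℕ) :
    gaussBinom q (a + b) a * finiteQPoch q q a * finiteQPoch q q b = finiteQPoch q q (a + b) := by
  induction a generalizing b with
  | zero => simp [finiteQPoch]
  | succ a iha =>
    induction b with
    | zero => simp [finiteQPoch]
    | succ b ihb =>
      have pascal_left := iha (b + 1)
      rw [show a + (b + 1) = a + 1 + b by ring] at pascal_left
      rw [← add_assoc, gaussBinom_succ_succ]
      simp only [finiteQPoch_succ] at pascal_left ihb ⊢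
      linear_combination (1 - q * q ^ a) * pascal_left + q ^ (a + 1) * (1 - q * q ^ b) * ihb

end FiniteQPochhammer

section TripleProductTerm

variable {K : Type*} [Field K]

/-- The `m`-th term `(-z) ^ m * q ^ (m * (m - 1) / 2)` in the expansion of `jTheta q z`.
The integer division in the exponent is exact. -/
def thetaTerm (q z : K) (m : ℤ) : K :=
  (-z) ^ m * q ^ (m * (m - 1) / 2)

lemma thetaTerm_ne_zero {q z : K} (hq : q ≠ 0) (hz : z ≠ 0) (m : ℤ) : thetaTerm q z m ≠ 0 :=
  mul_ne_zero (zpow_ne_zero _ (neg_ne_zero.2 hz)) (zpow_ne_zero _ hq)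

lemma thetaTerm_natCast (q z : K) (n : ℕ) : thetaTerm q z n = q ^ n.choose 2 * (-z) ^ n := by
  have exponent : (n : ℤ) * (n - 1) / 2 = n.choose 2 := by
    rw [Nat.choose_two_right]
    cases n <;> simp
  rw [thetaTerm, exponent, zpow_natCast, zpow_natCast, mul_comm]

lemma thetaTerm_natCast_eq_prod (q z : K) (n : ℕ) :
    thetaTerm q z n = ∏ k ∈ range n, -(z * q ^ k) := by
  simp only [← neg_mul]
  rw [prod_mul_distrib, prod_pow_eq_pow_sum, sum_range_id, prod_const, card_range,
    thetaTerm_natCast, Nat.choose_two_right, mul_comm]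

lemma thetaTerm_add {q z : K} (hq : q ≠ 0) (hz : z ≠ 0) (a b : ℤ) :
    thetaTerm q z (a + b) = thetaTerm q z a * thetaTerm q (z * q ^ a) b := by
  have exponent : (a + b) * (a + b - 1) / 2 = a * (a - 1) / 2 + b * (b - 1) / 2 + a * b := by
    obtain ⟨k, hk⟩ := a.even_mul_pred_self
    obtain ⟨l, hl⟩ := b.even_mul_pred_self
    have : (a + b) * (a + b - 1) = a * (a - 1) + b * (b - 1) + 2 * (a * b) := by ring
    lia
  simp only [thetaTerm, exponent, zpow_add₀ hq, zpow_add₀ (neg_ne_zero.2 hz), ← neg_mul, mul_zpow,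
    ← zpow_mul]
  ring

lemma thetaTerm_neg {q : K} (hq : q ≠ 0) (z : K) (m : ℤ) :
    thetaTerm q z (-m) = thetaTerm q (q * z⁻¹) m := by
  have exponent : -m * (-m - 1) / 2 = m + m * (m - 1) / 2 := by
    obtain ⟨k, hk⟩ := m.even_mul_pred_self
    have : -m * (-m - 1) = 2 * m + m * (m - 1) := by ring
    lia
  rw [thetaTerm, exponent, zpow_add₀ hq, thetaTerm, zpow_neg, ← inv_zpow, inv_neg, ← mul_neg,
    mul_zpow]
  ring

lemma finiteQPoch_eq_sum_thetaTerm (q x : K) (n : ℕ) :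
    finiteQPoch x q n = ∑ j ∈ range (n + 1), gaussBinom q n j * thetaTerm q x j := by
  simpa only [thetaTerm_natCast, finiteQPoch, sub_eq_add_neg, neg_mul] using
    prod_one_add_mul_pow_eq_sum_gaussBinom (-x) q n

lemma finiteQPoch_eq_thetaTerm_mul {q x : K} (hq : q ≠ 0) (hx : x ≠ 0) (n : ℕ) :
    finiteQPoch x q n = thetaTerm q x n * finiteQPoch (q * (x * q ^ n)⁻¹) q n := by
  rw [thetaTerm_natCast_eq_prod, finiteQPoch, finiteQPoch,
    ← prod_range_reflect (fun k ↦ 1 - q * (x * q ^ n)⁻¹ * q ^ k), ← prod_mul_distrib]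
  refine prod_congr rfl fun k hk ↦ ?_
  obtain ⟨d, rfl⟩ : ∃ d, n = k + 1 + d := Nat.exists_eq_add_of_le (mem_range.1 hk)
  rw [show k + 1 + d - 1 - k = d by lia]
  field_simp
  ring

lemma finiteQPoch_two_mul_eq_thetaTerm_mul_sum {q x : K} (hq : q ≠ 0) (hx : x ≠ 0) (N : ℕ) :
    finiteQPoch x q (2 * N) = thetaTerm q x N * ∑ m ∈ Icc (-N : ℤ) N,
      gaussBinom q (2 * N) (N + m).toNat * thetaTerm q (x * q ^ N) m := by
  rw [finiteQPoch_eq_sum_thetaTerm, mul_sum]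
  refine sum_nbij' (fun j ↦ (j : ℤ) - N) (fun m ↦ (N + m).toNat)
    (by grind) (by grind) (by grind) (by grind) fun j _ ↦ ?_
  have split := thetaTerm_add hq hx N (j - N)
  rw [add_sub_cancel, zpow_natCast] at split
  rw [split, add_sub_cancel, Int.toNat_natCast, mul_left_comm]

theorem finiteQPoch_mul_finiteQPoch_eq_sum {q z : K} (hq : q ≠ 0) (hz : z ≠ 0) (N : ℕ) :
    finiteQPoch z q N * finiteQPoch (q * z⁻¹) q N =
      ∑ m ∈ Icc (-N : ℤ) N, gaussBinom q (2 * N) (N + m).toNat * thetaTerm q z m := by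
  obtain ⟨x, rfl⟩ : ∃ x, z = x * q ^ N := ⟨z / q ^ N, by field_simp⟩
  have hx : x ≠ 0 := left_ne_zero_of_mul hz
  apply mul_left_cancel₀ (thetaTerm_ne_zero hq hx N)
  rw [← finiteQPoch_two_mul_eq_thetaTerm_mul_sum hq hx, two_mul, finiteQPoch_add,
    finiteQPoch_eq_thetaTerm_mul hq hx]
  ring

end TripleProductTerm

section NormedField

variable {𝕜 : Type*} [NormedField 𝕜] {q : 𝕜}

lemma summable_norm_neg_mul_pow (z : 𝕜) (hq : ‖q‖ < 1) : Summable fun n : ℕ ↦ ‖-(z * q ^ n)‖ := by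
  simpa using (summable_geometric_of_lt_one (norm_nonneg q) hq).mul_left ‖z‖

lemma one_sub_mul_pow_self_ne_zero (hq : ‖q‖ < 1) (n : ℕ) : 1 - q * q ^ n ≠ 0 := by
  rw [← pow_succ', sub_ne_zero]
  intro h
  have norm_lt : ‖q ^ (n + 1)‖ < 1 := by
    simpa using pow_lt_one₀ (norm_nonneg q) hq n.succ_ne_zero
  simp [← h] at norm_lt

lemma finiteQPoch_self_ne_zero (hq : ‖q‖ < 1) (n : ℕ) : finiteQPoch q q n ≠ 0 :=
  prod_ne_zero_iff.2 fun k _ ↦ one_sub_mul_pow_self_ne_zero hq k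

lemma gaussBinom_add_eq_div (hq : ‖q‖ < 1) (a b : ℕ) :
    gaussBinom q (a + b) a =
      finiteQPoch q q (a + b) / (finiteQPoch q q a * finiteQPoch q q b) := by
  rw [eq_div_iff (mul_ne_zero (finiteQPoch_self_ne_zero hq a) (finiteQPoch_self_ne_zero hq b)),
    ← mul_assoc, gaussBinom_mul_finiteQPoch_mul_finiteQPoch]

lemma summable_thetaTerm_natCast [CompleteSpace 𝕜] (z : 𝕜) (hq : ‖q‖ < 1) :
    Summable fun n : ℕ ↦ thetaTerm q z n := by
  have ratio_small : ∀ᶠ n : ℕ in atTop, ‖-(z * q ^ n)‖ < 1 / 2 :=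
    (summable_norm_neg_mul_pow z hq).tendsto_atTop_zero.eventually_lt_const (by norm_num)
  refine summable_of_ratio_norm_eventually_le (r := 1 / 2) (by norm_num) ?_
  filter_upwards [ratio_small] with n hn
  rw [thetaTerm_natCast_eq_prod, prod_range_succ, ← thetaTerm_natCast_eq_prod, norm_mul, mul_comm]
  gcongr

lemma summable_thetaTerm [CompleteSpace 𝕜] (z : 𝕜) (hq0 : q ≠ 0) (hq : ‖q‖ < 1) :
    Summable (thetaTerm q z) :=
  .of_nat_of_neg (summable_thetaTerm_natCast z hq) <| by
    simpa only [thetaTerm_neg hq0] using summable_thetaTerm_natCast (q * z⁻¹) hq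

end NormedField

section Limit

variable {q : ℂ}

lemma tendsto_finiteQPoch (z : ℂ) (hq : ‖q‖ < 1) :
    Tendsto (finiteQPoch z q) atTop (𝓝 (qPoch z q)) := by
  have h := (multipliable_one_add_of_summable
    (summable_norm_neg_mul_pow z hq)).hasProd.tendsto_prod_nat
  simp only [← sub_eq_add_neg] at h
  exact h

lemma qPoch_self_ne_zero (hq : ‖q‖ < 1) : qPoch q q ≠ 0 := by
  simpa only [qPoch, sub_eq_add_neg] using
    tprod_one_add_ne_zero_of_summable
      (fun n ↦ by simpa only [sub_eq_add_neg] using one_sub_mul_pow_self_ne_zero hq n)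
      (summable_norm_neg_mul_pow q hq)

lemma tendsto_gaussBinom_add (hq : ‖q‖ < 1) {ι : Type*} {l : Filter ι} {a b : ι → ℕ}
    (ha : Tendsto a l atTop) (hb : Tendsto b l atTop) :
    Tendsto (fun i ↦ gaussBinom q (a i + b i) (a i)) l (𝓝 (qPoch q q)⁻¹) := by
  have hne := qPoch_self_ne_zero hq
  have lim := tendsto_finiteQPoch q hq
  have quotient := (lim.comp (ha.atTop_add_atTop hb)).div ((lim.comp ha).mul (lim.comp hb))
    (mul_ne_zero hne hne)
  rw [div_mul_cancel_left₀ hne] at quotient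
  exact quotient.congr fun i ↦ (gaussBinom_add_eq_div hq (a i) (b i)).symm

lemma exists_norm_gaussBinom_le (hq : ‖q‖ < 1) : ∃ C, ∀ n k, ‖gaussBinom q n k‖ ≤ C := by
  have lim := tendsto_finiteQPoch q hq
  obtain ⟨A, hA⟩ := (Metric.isBounded_range_of_tendsto _ lim).exists_norm_le
  obtain ⟨B, hB⟩ := (Metric.isBounded_range_of_tendsto _
    (lim.inv₀ (qPoch_self_ne_zero hq))).exists_norm_le
  simp only [Set.forall_mem_range] at hA hB
  have hA0 : 0 ≤ A := (norm_nonneg _).trans (hA 0)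
  have hB0 : 0 ≤ B := (norm_nonneg _).trans (hB 0)
  refine ⟨A * (B * B), fun n k ↦ ?_⟩
  obtain hnk | hkn := lt_or_ge n k
  · rw [gaussBinom_eq_zero_of_lt q hnk, norm_zero]
    positivity
  · obtain ⟨b, rfl⟩ := Nat.exists_eq_add_of_le hkn
    rw [gaussBinom_add_eq_div hq, div_eq_mul_inv, mul_inv, norm_mul, norm_mul]
    gcongr
    exacts [hA _, hB _, hB _]

lemma tendsto_sum_gaussBinom_mul {f : ℤ → ℂ} (hq : ‖q‖ < 1) (hf : Summable f) :
    Tendsto (fun N : ℕ ↦ ∑ m ∈ Icc (-N : ℤ) N, gaussBinom q (2 * N) (N + m).toNat * f m) atTop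
      (𝓝 (∑' m, (qPoch q q)⁻¹ * f m)) := by
  obtain ⟨C, hC⟩ := exists_norm_gaussBinom_le hq
  simp only [sum_eq_tsum_indicator (L := .unconditional ℤ)]
  refine tendsto_tsum_of_dominated_convergence (hf.norm.mul_left C) (fun m ↦ ?_) (.of_forall ?_)
  · have toNat_add (k : ℤ) : Tendsto (fun N : ℕ ↦ (N + k).toNat) atTop atTop :=
      tendsto_atTop.2 fun b ↦ by
        filter_upwards [eventually_ge_atTop (b + k.natAbs)] with N hN
        lia
    refine ((tendsto_gaussBinom_add hq (toNat_add m) (toNat_add (-m))).mul_const (f m)).congr' ?_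
    filter_upwards [eventually_ge_atTop m.natAbs] with N hN
    have hm : m ∈ (Icc (-N : ℤ) N : Set ℤ) := by
      rw [mem_coe, mem_Icc]
      lia
    rw [Set.indicator_of_mem hm, show (N + m).toNat + (N + -m).toNat = 2 * N by lia]
  · intro N m
    refine (norm_indicator_le_norm_self _ _).trans ?_
    rw [norm_mul]
    exact mul_le_mul_of_nonneg_right (hC _ _) (norm_nonneg _)

theorem jacobi_triple_product {z : ℂ} (hq0 : q ≠ 0) (hq : ‖q‖ < 1) (hz : z ≠ 0) :
    HasSum (thetaTerm q z) (jTheta q z) := by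
  have summable : Summable (thetaTerm q z) := summable_thetaTerm z hq0 hq
  have products : Tendsto (fun N ↦ finiteQPoch z q N * finiteQPoch (q * z⁻¹) q N) atTop
      (𝓝 (qPoch z q * qPoch (q * z⁻¹) q)) :=
    (tendsto_finiteQPoch z hq).mul (tendsto_finiteQPoch _ hq)
  simp only [finiteQPoch_mul_finiteQPoch_eq_sum hq0 hz] at products
  have limit := tendsto_nhds_unique products (tendsto_sum_gaussBinom_mul hq summable)
  rw [tsum_mul_left, eq_inv_mul_iff_mul_eq₀ (qPoch_self_ne_zero hq)] at limit
  rw [jTheta, mul_comm, limit]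
  exact summable.hasSum

end Limit

section JacobiTheta

lemma jacobiTheta₂_term_eq_thetaTerm (m : ℤ) (w τ : ℂ) :
    jacobiTheta₂_term m w τ =
      thetaTerm (exp (2 * Real.pi * I * τ)) (-exp (Real.pi * I * τ + 2 * Real.pi * I * w)) m := by
  have exponent : ((m * (m - 1) / 2 : ℤ) : ℂ) = m * (m - 1) / 2 := by
    rw [Int.cast_div_charZero m.even_mul_pred_self.two_dvd]
    push_cast
    rfl
  rw [jacobiTheta₂_term, thetaTerm, neg_neg, ← exp_int_mul, ← exp_int_mul, ← exp_add, exponent]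
  ring_nf

theorem jacobiTheta₂_eq_jTheta (w : ℂ) {τ : ℂ} (hτ : 0 < τ.im) :
    jacobiTheta₂ w τ =
      jTheta (exp (2 * Real.pi * I * τ)) (-exp (Real.pi * I * τ + 2 * Real.pi * I * w)) := by
  have hq : ‖exp (2 * Real.pi * I * τ)‖ < 1 := UpperHalfPlane.norm_exp_two_pi_I_lt_one ⟨τ, hτ⟩
  simp only [jacobiTheta₂, jacobiTheta₂_term_eq_thetaTerm]
  exact (jacobi_triple_product (exp_ne_zero _) hq (neg_ne_zero.2 (exp_ne_zero _))).tsum_eq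

lemma thetaChar_eq_exp_mul_jacobiTheta₂ (g1 g2 : ℝ) (xi tau : ℂ) :
    thetaChar g1 g2 xi tau =
      exp (Real.pi * I * tau * g1 ^ 2 + 2 * Real.pi * I * g1 * (xi + g2)) *
        jacobiTheta₂ (g1 * tau + xi + g2) tau := by
  rw [thetaChar, jacobiTheta₂, ← tsum_mul_left]
  refine tsum_congr fun m ↦ ?_
  rw [jacobiTheta₂_term, ← exp_add]
  ring_nf

end JacobiTheta

/-- Expression of the theta function with rational characteristics in terms of the usual
Jacobi theta function `Θ_p`, with `p = exp(2iπτ)` and `z = exp(iπξ)`: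
`ϑ[γ₁,γ₂](ξ,τ) = (−1)^{2γ₁γ₂} p^{γ₁²/2} z^{2γ₁} Θ_p(−e^{2iπγ₂} p^{γ₁+1/2} z²)`,
all fractional powers being written via the exponential function. -/
theorem stmt2 (tau : ℂ) (htau : 0 < tau.im) (g1 g2 : ℝ) (xi : ℂ) :
    thetaChar g1 g2 xi tau =
      Complex.exp ((Real.pi : ℂ) * I * (2 * (g1 : ℂ) * (g2 : ℂ)))
        * Complex.exp ((Real.pi : ℂ) * I * tau * (g1 : ℂ) ^ 2)
        * Complex.exp (2 * (Real.pi : ℂ) * I * (g1 : ℂ) * xi)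
        * jTheta (Complex.exp (2 * (Real.pi : ℂ) * I * tau))
            (-(Complex.exp (2 * (Real.pi : ℂ) * I * (g2 : ℂ))
              * Complex.exp (2 * (Real.pi : ℂ) * I * tau * ((g1 : ℂ) + 1 / 2))
              * Complex.exp (2 * (Real.pi : ℂ) * I * xi))) := by
  rw [thetaChar_eq_exp_mul_jacobiTheta₂, jacobiTheta₂_eq_jTheta _ htau]
  simp only [← exp_add]
  ring_nf
end

section
/- Let N ≥ 1 be an integer, τ ∈ ℂ with Im τ > 0, ω = exp(2iπ/N), and let ξ, ζ ∈ ℂ. For integers a, b define W_{(α₁,α₂)}(ξ,ζ,τ) = ϑ[1/2+α₁/N, 1/2+α₂/N](ξ + ζ/N, τ) / ( N · ϑ[1/2+α₁/N, 1/2+α₂/N](ζ/N, τ) ). Then for all a, b ∈ {0,…,N−1} (whenever no denominator vanishes): ∑_{s=0}^{N−1} W_{(−a,s)}(ξ,ζ,τ) · ω^{−bs} = ( ϑ[(b−a)/N + 1/2, 1/2](ξ+ζ, Nτ) / ϑ[−a/N + 1/2, 1/2](ζ, Nτ) ) · ( ∏_{k=0, k≠b}^{N−1} ϑ[k/N + 1/2,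 1/2](ξ, Nτ) ) / ( ∏_{k=1}^{N−1} ϑ[k/N + 1/2, 1/2](0, Nτ) ). -/
open Complex

/-- The Boltzmann-weight functions
`W_{(α₁,α₂)}(ξ,ζ,τ) = ϑ[1/2+α₁/N,1/2+α₂/N](ξ+ζ/N,τ) / (N ϑ[1/2+α₁/N,1/2+α₂/N](ζ/N,τ))`. -/
noncomputable def Wfun (N : ℕ) (a1 a2 : ℤ) (xi zeta tau : ℂ) : ℂ :=
  thetaChar (1 / 2 + (a1 : ℝ) / N) (1 / 2 + (a2 : ℝ) / N) (xi + zeta / N) tau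
    / ((N : ℂ) * thetaChar (1 / 2 + (a1 : ℝ) / N) (1 / 2 + (a2 : ℝ) / N) (zeta / N) tau)

/-
Clear denominators in `∑_s ϑ(ξ + (ζ + s)/N, τ) / ϑ((ζ + s)/N, τ)`, where `ϑ = ϑ[1/2, 1/2]`. As a
function of `z = ξ + ζ` the result is entire and has the quasi-periods of `ϑ(z, Nτ)` under `z + 1`
and `z + Nτ`; comparing Fourier coefficients, such functions are multiples of `ϑ(z, Nτ)`, so it
equals `C(ξ) ϑ(ξ + ζ, Nτ)`. At `ζ = 0` only the term `s = 0` survives because `ϑ(0, τ) = 0`, whence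
`C(ξ)` is proportional to `ϑ(ξ, τ) / ϑ(ξ, Nτ)`. The same uniqueness shows that `ϑ(ξ, τ)` is
proportional to `∏_{0 ≤ k < N} ϑ[k/N + 1/2, 1/2](ξ, Nτ)`, and `ξ = 0` fixes the remaining constant.
The values of `a` and `b` enter through the translations of `ζ` by `-aτ` and of `ξ` by `bτ`.
-/

open scoped Real

section Transformation

variable (g₁ g₂ x : ℝ) (m n : ℤ) (z w τ : ℂ)

/-- The `m`-th summand of the series defining `thetaChar g₁ g₂ z τ`. -/
noncomputable def thetaCharTerm : ℂ :=
  exp (π * I * (m + g₁) ^ 2 * τ + 2 * π * I * (m + g₁) * (z + g₂))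

lemma thetaChar_eq_tsum : thetaChar g₁ g₂ z τ = ∑' m, thetaCharTerm g₁ g₂ m z τ := rfl

lemma thetaCharTerm_ne_zero : thetaCharTerm g₁ g₂ m z τ ≠ 0 := exp_ne_zero _

lemma thetaCharTerm_add :
    thetaCharTerm g₁ g₂ m (z + w) τ =
      exp (2 * π * I * (m + g₁) * w) * thetaCharTerm g₁ g₂ m z τ := by
  rw [thetaCharTerm, thetaCharTerm, ← exp_add]
  ring_nf

lemma thetaCharTerm_add_one :
    thetaCharTerm g₁ g₂ m (z + 1) τ = exp (2 * π * I * g₁) * thetaCharTerm g₁ g₂ m z τ := by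
  rw [thetaCharTerm_add]
  congr 1
  exact exp_eq_exp_iff_exists_int.2 ⟨m, by ring⟩

lemma thetaCharTerm_add_tau :
    thetaCharTerm g₁ g₂ m (z + τ) τ =
      exp (-(π * I * τ) - 2 * π * I * (z + g₂)) * thetaCharTerm g₁ g₂ (m + 1) z τ := by
  rw [thetaCharTerm, thetaCharTerm, ← exp_add]
  push_cast
  ring_nf

lemma thetaCharTerm_div_thetaCharTerm_zero :
    thetaCharTerm g₁ g₂ m z τ / thetaCharTerm g₁ g₂ 0 z τ =
      thetaCharTerm g₁ g₂ m 0 τ / thetaCharTerm g₁ g₂ 0 0 τ * exp (2 * π * I * m * z) := by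
  simp only [thetaCharTerm, ← exp_sub, ← exp_add]
  push_cast
  ring_nf

lemma thetaCharTerm_eq_exp_mul_jacobiTheta₂_term :
    thetaCharTerm g₁ g₂ m z τ = exp (π * I * g₁ ^ 2 * τ + 2 * π * I * g₁ * (z + g₂)) *
      jacobiTheta₂_term m (z + g₂ + g₁ * τ) τ := by
  rw [thetaCharTerm, jacobiTheta₂_term, ← exp_add]
  ring_nf

lemma thetaChar_eq_exp_mul_jacobiTheta₂_s6 :
    thetaChar g₁ g₂ z τ = exp (π * I * g₁ ^ 2 * τ + 2 * π * I * g₁ * (z + g₂)) *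
      jacobiTheta₂ (z + g₂ + g₁ * τ) τ := by
  simp only [thetaChar_eq_tsum, thetaCharTerm_eq_exp_mul_jacobiTheta₂_term, tsum_mul_left,
    jacobiTheta₂]

variable {τ} in
lemma summable_thetaCharTerm (hτ : 0 < τ.im) : Summable fun m ↦ thetaCharTerm g₁ g₂ m z τ := by
  simp only [thetaCharTerm_eq_exp_mul_jacobiTheta₂_term]
  exact ((summable_jacobiTheta₂_term_iff _ τ).2 hτ).mul_left _

variable {τ} in
lemma differentiable_thetaChar (hτ : 0 < τ.im) : Differentiable ℂ fun z ↦ thetaChar g₁ g₂ z τ := by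
  have h : Differentiable ℂ fun w ↦ jacobiTheta₂ w τ :=
    fun w ↦ differentiableAt_jacobiTheta₂_fst w hτ
  simp only [thetaChar_eq_exp_mul_jacobiTheta₂_s6]
  fun_prop

lemma thetaChar_add_one :
    thetaChar g₁ g₂ (z + 1) τ = exp (2 * π * I * g₁) * thetaChar g₁ g₂ z τ := by
  simp only [thetaChar_eq_tsum, thetaCharTerm_add_one, tsum_mul_left]

lemma thetaChar_add_real_mul_tau :
    thetaChar g₁ g₂ (z + x * τ) τ =
      exp (-(π * I * x ^ 2 * τ) - 2 * π * I * x * (z + g₂)) * thetaChar (g₁ + x) g₂ z τ := by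
  simp only [thetaChar_eq_tsum, ← tsum_mul_left]
  refine tsum_congr fun m ↦ ?_
  rw [thetaCharTerm, thetaCharTerm, ← exp_add]
  push_cast
  ring_nf

lemma thetaChar_right_add : thetaChar g₁ (g₂ + x) z τ = thetaChar g₁ g₂ (z + x) τ := by
  simp only [thetaChar, ofReal_add, add_assoc, add_comm (x : ℂ)]

lemma thetaChar_left_add_intCast : thetaChar (g₁ + n) g₂ z τ = thetaChar g₁ g₂ z τ := by
  rw [thetaChar_eq_tsum, thetaChar_eq_tsum,
    ← (Equiv.addRight n).tsum_eq (thetaCharTerm g₁ g₂ · z τ)]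
  refine tsum_congr fun m ↦ ?_
  simp only [thetaCharTerm, Equiv.coe_addRight]
  push_cast
  ring_nf

lemma thetaChar_add_intCast_mul_tau :
    thetaChar g₁ g₂ (z + n * τ) τ =
      exp (-(π * I * n ^ 2 * τ) - 2 * π * I * n * (z + g₂)) * thetaChar g₁ g₂ z τ := by
  simpa only [ofReal_intCast, thetaChar_left_add_intCast] using
    thetaChar_add_real_mul_tau g₁ g₂ n z τ

lemma thetaChar_add_tau :
    thetaChar g₁ g₂ (z + τ) τ =
      exp (-(π * I * τ) - 2 * π * I * (z + g₂)) * thetaChar g₁ g₂ z τ := by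
  simpa using thetaChar_add_intCast_mul_tau g₁ g₂ 1 z τ

lemma thetaChar_half_half_zero : thetaChar (1 / 2) (1 / 2) 0 τ = 0 := by
  have h : jacobiTheta₂ ((1 + τ) / 2) τ = -jacobiTheta₂ ((1 + τ) / 2) τ := calc
    _ = jacobiTheta₂ (-((1 + τ) / 2) + τ) τ := by
      rw [← jacobiTheta₂_add_left (-_ + τ)]; ring_nf
    _ = exp (π * I) * jacobiTheta₂ ((1 + τ) / 2) τ := by
      rw [jacobiTheta₂_add_left', jacobiTheta₂_neg_left]; ring_nf
    _ = _ := by rw [exp_pi_mul_I, neg_one_mul]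
  rw [thetaChar_eq_exp_mul_jacobiTheta₂_s6]
  push_cast
  rw [show (0 + 1 / 2 + 1 / 2 * τ : ℂ) = (1 + τ) / 2 by ring, self_eq_neg.1 h, mul_zero]

lemma thetaChar_div_thetaChar_add_real_mul_tau (g₁' : ℝ) :
    thetaChar g₁ g₂ (z + w + x * τ) τ / thetaChar g₁' g₂ (w + x * τ) τ =
      exp (-(2 * π * I * x * z)) *
        (thetaChar (g₁ + x) g₂ (z + w) τ / thetaChar (g₁' + x) g₂ w τ) := by
  rw [thetaChar_add_real_mul_tau, thetaChar_add_real_mul_tau, mul_div_mul_comm, ← exp_sub]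
  ring_nf

end Transformation

section EntireFunction

lemma eq_zero_or_eq_zero_of_differentiable_of_mul_eq_zero {f g : ℂ → ℂ} (hf : Differentiable ℂ f)
    (hg : Differentiable ℂ g) (h : ∀ z, f z * g z = 0) : (∀ z, f z = 0) ∨ ∀ z, g z = 0 := by
  simpa using AnalyticOnNhd.eq_zero_or_eq_zero_of_mul_eq_zero (fun z _ ↦ hf.analyticAt z)
    (fun z _ ↦ hg.analyticAt z) (fun z _ ↦ h z) isPreconnected_univ

lemma exists_prod_ne_zero_of_differentiable {ι : Type*} (s : Finset ι) {f : ι → ℂ → ℂ}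
    (hd : ∀ i ∈ s, Differentiable ℂ (f i)) (hf : ∀ i ∈ s, ∃ z, f i z ≠ 0) :
    ∃ z, ∏ i ∈ s, f i z ≠ 0 := by
  induction s using Finset.cons_induction with
  | empty => exact ⟨0, by simp⟩
  | cons i s hi ih =>
    simp only [Finset.forall_mem_cons, Finset.prod_cons] at hd hf ⊢
    obtain ⟨w, hw⟩ := ih hd.2 hf.2
    obtain ⟨v, hv⟩ := hf.1
    by_contra! h
    rcases eq_zero_or_eq_zero_of_differentiable_of_mul_eq_zero hd.1
      (Differentiable.fun_finsetProd hd.2) h with h0 | h0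
    · exact hv (h0 v)
    · exact hw (h0 w)

end EntireFunction

section Fourier

lemma integral_exp_two_pi_mul_I_mul_intCast {n : ℤ} (hn : n ≠ 0) :
    ∫ t in (0 : ℝ)..1, exp (2 * π * I * n * t) = 0 := by
  have h : 2 * π * I * n ≠ 0 := mul_ne_zero two_pi_I_ne_zero (Int.cast_ne_zero.2 hn)
  rw [integral_exp_mul_complex h, ofReal_one, ofReal_zero, mul_one, mul_zero, exp_zero,
    exp_eq_one_iff.2 ⟨n, by ring⟩, sub_self, zero_div]

lemma intervalIntegral_add_left_eq_of_periodic {E : Type*} [NormedAddCommGroup E]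
    [NormedSpace ℂ E] [CompleteSpace E] {h : ℂ → E} {T : ℝ} (hd : Differentiable ℂ h)
    (hp : Function.Periodic h T) (w : ℂ) :
    ∫ t in (0 : ℝ)..T, h (w + t) = ∫ t in (0 : ℝ)..T, h t := by
  obtain ⟨F, hF⟩ := hd.isExactOn_univ
  have hF' (z : ℂ) : HasDerivAt F (h z) z := hF z trivial
  have hint (z : ℂ) : ∫ t in (0 : ℝ)..T, h (z + t) = F (z + T) - F z := by
    have hderiv (t : ℝ) : HasDerivAt (fun t : ℝ ↦ F (z + t)) (h (z + t)) t := by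
      simpa using! ((hF' (z + t)).comp_const_add z t).scomp t (hasDerivAt_id t).ofReal_comp
    have hcont : Continuous fun t : ℝ ↦ h (z + t) := by have := hd.continuous; fun_prop
    simpa using intervalIntegral.integral_eq_sub_of_hasDerivAt (fun t _ ↦ hderiv t)
      (hcont.intervalIntegrable 0 T)
  have hzero (z : ℂ) : HasDerivAt (fun z ↦ F (z + T) - F z) 0 z := by
    simpa [hp z] using! ((hF' (z + T)).comp_add_const z T).sub (hF' z)
  have hconst := is_const_of_deriv_eq_zero (fun z ↦ (hzero z).differentiableAt)
    (fun z ↦ (hzero z).deriv) w 0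
  rw [hint, hconst, ← hint]
  simp only [zero_add]

lemma hasSum_fourierCoeffOn_zero {g : ℝ → ℂ} {T : ℝ} (hT : 0 < T)
    (hg : ContinuousOn g (Set.Icc 0 T)) (hp : g 0 = g T) (hs : Summable (fourierCoeffOn hT g)) :
    HasSum (fourierCoeffOn hT g) (g 0) := by
  have : Fact (0 < T) := ⟨hT⟩
  let G : C(AddCircle T, ℂ) := ⟨AddCircle.liftIco T 0 g,
    AddCircle.liftIco_continuous (by simpa using hp) (by simpa using hg)⟩
  have hcoeff : fourierCoeff G = fourierCoeffOn hT g := by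
    ext n
    simpa using! fourierCoeff_liftIco_eq (a := 0) g n
  have hG : G (0 : ℝ) = g 0 := AddCircle.liftIco_coe_apply (by simpa using hT)
  have hsum := has_pointwise_sum_fourier_series_of_summable (f := G) (hcoeff ▸ hs) (0 : ℝ)
  rw [hG, hcoeff] at hsum
  simpa using hsum

end Fourier

section ThetaFunction

/-- Entire functions with the quasi-periodicity of `thetaChar g₁ g₂ · τ` with respect to the lattice
`ℤ + ℤτ`. -/
structure IsThetaFunction (g₁ g₂ : ℝ) (τ : ℂ) (f : ℂ → ℂ) : Prop where
  differentiable : Differentiable ℂ f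
  add_one (z : ℂ) : f (z + 1) = exp (2 * π * I * g₁) * f z
  add_tau (z : ℂ) : f (z + τ) = exp (-(π * I * τ) - 2 * π * I * (z + g₂)) * f z

namespace IsThetaFunction

variable {g₁ g₂ : ℝ} {τ : ℂ} {f : ℂ → ℂ}

lemma add_intCast (hf : IsThetaFunction g₁ g₂ τ f) (m n : ℤ) :
    IsThetaFunction (g₁ + m) (g₂ + n) τ f where
  differentiable := hf.differentiable
  add_one z := by
    rw [hf.add_one]
    congr 1
    exact exp_eq_exp_iff_exists_int.2 ⟨-m, by push_cast; ring⟩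
  add_tau z := by
    rw [hf.add_tau]
    congr 1
    exact exp_eq_exp_iff_exists_int.2 ⟨n, by push_cast; ring⟩

lemma periodic_div_thetaCharTerm (hf : IsThetaFunction g₁ g₂ τ f) (n : ℤ) :
    Function.Periodic (fun z ↦ f z / thetaCharTerm g₁ g₂ n z τ) 1 := fun z ↦ by
  simp only [hf.add_one, thetaCharTerm_add_one, mul_div_mul_left _ _ (exp_ne_zero _)]

lemma differentiable_div_thetaCharTerm (hf : IsThetaFunction g₁ g₂ τ f) (n : ℤ) :
    Differentiable ℂ fun z ↦ f z / thetaCharTerm g₁ g₂ n z τ :=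
  hf.differentiable.div (by unfold thetaCharTerm; fun_prop) (thetaCharTerm_ne_zero g₁ g₂ n · τ)

lemma integral_div_thetaCharTerm (hf : IsThetaFunction g₁ g₂ τ f) (n : ℤ) (z : ℂ) :
    ∫ t in (0 : ℝ)..1, f (z + t) / thetaCharTerm g₁ g₂ n (z + t) τ =
      ∫ t in (0 : ℝ)..1, f t / thetaCharTerm g₁ g₂ 0 t τ := by
  let φ (n : ℤ) (z : ℂ) : ℂ := f z / thetaCharTerm g₁ g₂ n z τ
  have hφτ (n : ℤ) (z : ℂ) : φ n (τ + z) = φ (n + 1) z := by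
    simp only [φ, add_comm τ, hf.add_tau, thetaCharTerm_add_tau,
      mul_div_mul_left _ _ (exp_ne_zero _)]
  have hshift (n : ℤ) (w : ℂ) : ∫ t in (0 : ℝ)..1, φ n (w + t) = ∫ t in (0 : ℝ)..1, φ n t :=
    intervalIntegral_add_left_eq_of_periodic (hf.differentiable_div_thetaCharTerm n)
      (by simpa only [ofReal_one] using hf.periodic_div_thetaCharTerm n) w
  have hper : Function.Periodic (fun n ↦ ∫ t in (0 : ℝ)..1, φ n t) 1 := fun n ↦ by
    simp only [← hφτ, hshift]
  calc ∫ t in (0 : ℝ)..1, φ n (z + t) = ∫ t in (0 : ℝ)..1, φ n t := hshift n z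
    _ = ∫ t in (0 : ℝ)..1, φ 0 t := by simpa using hper.int_mul_eq n

lemma fourierCoeffOn_div_thetaCharTerm_zero (hf : IsThetaFunction g₁ g₂ τ f) (z : ℂ) (n : ℤ) :
    fourierCoeffOn one_pos (fun t : ℝ ↦ f (z + t) / thetaCharTerm g₁ g₂ 0 (z + t) τ) n =
      (∫ t in (0 : ℝ)..1, f t / thetaCharTerm g₁ g₂ 0 t τ) / thetaCharTerm g₁ g₂ 0 z τ *
        thetaCharTerm g₁ g₂ n z τ := by
  rw [fourierCoeffOn_eq_integral, ← hf.integral_div_thetaCharTerm n z, div_mul_eq_mul_div,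
    mul_div_assoc, ← intervalIntegral.integral_mul_const]
  simp only [sub_zero, div_one, one_smul]
  refine intervalIntegral.integral_congr fun t _ ↦ ?_
  have hexp : exp (2 * π * I * (n + g₁) * t) =
      exp (2 * π * I * n * t) * exp (2 * π * I * g₁ * t) := by
    rw [← exp_add]
    ring_nf
  have hfourier : fourier (-n) (t : AddCircle (1 - 0 : ℝ)) = (exp (2 * π * I * n * t))⁻¹ := by
    rw [fourier_coe_apply, ← exp_neg]
    push_cast
    ring_nf
  have h0 := thetaCharTerm_ne_zero g₁ g₂ 0 z τ
  have hn := thetaCharTerm_ne_zero g₁ g₂ n z τ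
  simp only [thetaCharTerm_add, hexp, hfourier, Int.cast_zero, zero_add, smul_eq_mul]
  field_simp

theorem exists_eq_const_mul_thetaChar (hf : IsThetaFunction g₁ g₂ τ f) (hτ : 0 < τ.im) :
    ∃ C : ℂ, ∀ z, f z = C * thetaChar g₁ g₂ z τ := by
  let C : ℂ := ∫ t in (0 : ℝ)..1, f t / thetaCharTerm g₁ g₂ 0 t τ
  refine ⟨C, fun z ↦ ?_⟩
  let g (t : ℝ) : ℂ := f (z + t) / thetaCharTerm g₁ g₂ 0 (z + t) τ
  have hcoeff : fourierCoeffOn one_pos g =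
      fun n ↦ C / thetaCharTerm g₁ g₂ 0 z τ * thetaCharTerm g₁ g₂ n z τ :=
    funext (hf.fourierCoeffOn_div_thetaCharTerm_zero z)
  have hcont : Continuous g := (hf.differentiable_div_thetaCharTerm 0).continuous.comp
    (by fun_prop : Continuous fun t : ℝ ↦ z + (t : ℂ))
  have hper : g 0 = g 1 := by simpa [g] using (hf.periodic_div_thetaCharTerm 0 z).symm
  have hsum : HasSum (fourierCoeffOn one_pos g) (g 0) :=
    hasSum_fourierCoeffOn_zero one_pos hcont.continuousOn hper
      (hcoeff ▸ (summable_thetaCharTerm g₁ g₂ z hτ).mul_left _)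
  have hg : f z / thetaCharTerm g₁ g₂ 0 z τ =
      C / thetaCharTerm g₁ g₂ 0 z τ * thetaChar g₁ g₂ z τ := by
    rw [thetaChar_eq_tsum, ← tsum_mul_left, ← hcoeff, hsum.tsum_eq]
    simp only [g, ofReal_zero, add_zero]
  rwa [div_mul_eq_mul_div, div_left_inj' (thetaCharTerm_ne_zero g₁ g₂ 0 z τ)] at hg

end IsThetaFunction

lemma isThetaFunction_thetaChar (g₁ g₂ : ℝ) {τ : ℂ} (hτ : 0 < τ.im) :
    IsThetaFunction g₁ g₂ τ (thetaChar g₁ g₂ · τ) where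
  differentiable := differentiable_thetaChar g₁ g₂ hτ
  add_one z := thetaChar_add_one g₁ g₂ z τ
  add_tau z := thetaChar_add_tau g₁ g₂ z τ

lemma integral_thetaChar_div_thetaCharTerm_zero (g₁ g₂ : ℝ) {τ : ℂ} (hτ : 0 < τ.im) :
    ∫ t in (0 : ℝ)..1, thetaChar g₁ g₂ t τ / thetaCharTerm g₁ g₂ 0 t τ = 1 := by
  let c (n : ℤ) : ℂ := thetaCharTerm g₁ g₂ n 0 τ / thetaCharTerm g₁ g₂ 0 0 τ
  let F (n : ℤ) : C(ℝ, ℂ) := ⟨fun t ↦ c n * exp (2 * π * I * n * t), by fun_prop⟩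
  have hc : Summable fun n ↦ ‖c n‖ := ((summable_thetaCharTerm g₁ g₂ 0 hτ).div_const _).norm
  have hF : Summable fun n ↦ ‖(F n).restrict
      (⟨Set.uIcc (0 : ℝ) 1, isCompact_uIcc⟩ : TopologicalSpace.Compacts ℝ)‖ := by
    refine hc.of_nonneg_of_le (fun _ ↦ norm_nonneg _) fun n ↦
      (ContinuousMap.norm_le _ (norm_nonneg _)).2 fun t ↦ ?_
    simp [F, norm_exp]
  have hint (n : ℤ) : ∫ t in (0 : ℝ)..1, F n t = if n = 0 then 1 else 0 := by
    simp only [F, ContinuousMap.coe_mk, intervalIntegral.integral_const_mul]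
    split_ifs with hn
    · simp [hn, c, thetaCharTerm_ne_zero]
    · rw [integral_exp_two_pi_mul_I_mul_intCast hn, mul_zero]
  calc
    _ = ∫ t in (0 : ℝ)..1, ∑' n, F n t := by
      refine intervalIntegral.integral_congr fun t _ ↦ ?_
      simp only [thetaChar_eq_tsum, ← tsum_div_const]
      exact tsum_congr fun n ↦ thetaCharTerm_div_thetaCharTerm_zero g₁ g₂ n t τ
    _ = ∑' n, ∫ t in (0 : ℝ)..1, F n t :=
      (intervalIntegral.tsum_intervalIntegral_eq_of_summable_norm hF).symm
    _ = 1 := by simp only [hint, tsum_ite_eq]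

lemma exists_thetaChar_ne_zero (g₁ g₂ : ℝ) {τ : ℂ} (hτ : 0 < τ.im) :
    ∃ z, thetaChar g₁ g₂ z τ ≠ 0 := by
  by_contra! h
  have hint := integral_thetaChar_div_thetaCharTerm_zero g₁ g₂ hτ
  simp only [h, zero_div, intervalIntegral.integral_zero, zero_ne_one] at hint

end ThetaFunction

section FiniteSum

variable {R : Type*} [CommRing R] {N : ℕ}

lemma prod_range_add_one_of_eq_mul (hN : N ≠ 0) {p : ℕ → R} {e : R} (hp : p N = e * p 0) :
    ∏ k ∈ Finset.range N, p (k + 1) = e * ∏ k ∈ Finset.range N, p k := by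
  obtain ⟨M, rfl⟩ := Nat.exists_eq_succ_of_ne_zero hN
  rw [Finset.prod_range_succ, hp, Finset.prod_range_succ' p]
  ring

open Polynomial in
lemma sum_mul_prod_erase_eq_eval_derivative (s : Finset ℕ) (u v : ℕ → R) :
    ∑ i ∈ s, u i * ∏ j ∈ s.erase i, v j =
      (derivative (∏ i ∈ s, (C (v i) + X * C (u i)))).eval 0 := by
  rw [derivative_prod_finset, eval_finsetSum]
  refine Finset.sum_congr rfl fun i _ ↦ ?_
  rw [mul_comm]
  simp [eval_prod]

-- The sum is the linear coefficient of `∏ (v s + X * u s)`, which reduces the cyclic shift of the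
-- sum to that of a product.
open Polynomial in
lemma sum_mul_prod_erase_add_one_of_eq_mul (hN : N ≠ 0) {u v : ℕ → R} {e : R}
    (hu : u N = e * u 0) (hv : v N = e * v 0) :
    ∑ s ∈ Finset.range N, u (s + 1) * ∏ t ∈ (Finset.range N).erase s, v (t + 1) =
      e * ∑ s ∈ Finset.range N, u s * ∏ t ∈ (Finset.range N).erase s, v t := by
  have hp : C (v N) + X * C (u N) = C e * (C (v 0) + X * C (u 0)) := by
    simp only [hu, hv, map_mul]
    ring
  rw [sum_mul_prod_erase_eq_eval_derivative _ u v,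
    sum_mul_prod_erase_eq_eval_derivative _ (fun s ↦ u (s + 1)) (fun s ↦ v (s + 1)),
    prod_range_add_one_of_eq_mul (p := fun t ↦ C (v t) + X * C (u t)) hN hp]
  simp

lemma prod_Ico_one_add_eq_prod_erase {M : Type*} [CommMonoid M] {b : ℕ} (hb : b < N) {p : ℕ → M}
    (hp : Function.Periodic p N) :
    ∏ k ∈ Finset.Ico 1 N, p (k + b) = ∏ k ∈ (Finset.range N).erase b, p k := by
  have hsplit : (Finset.range N).erase b = Finset.range b ∪ Finset.Ico (b + 1) N := by
    ext k
    simp only [Finset.mem_erase, Finset.mem_range, Finset.mem_union, Finset.mem_Ico]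
    omega
  have hdisj : Disjoint (Finset.range b) (Finset.Ico (b + 1) N) :=
    Finset.disjoint_left.2 fun k ↦ by simp only [Finset.mem_range, Finset.mem_Ico]; omega
  have hwrap : ∏ k ∈ Finset.Ico N (b + N), p k = ∏ k ∈ Finset.range b, p k := by
    simpa only [Finset.range_eq_Ico, hp _, zero_add] using (Finset.prod_Ico_add' p 0 b N).symm
  calc
    _ = ∏ k ∈ Finset.Ico (b + 1) (b + N), p k := by
      rw [Finset.prod_Ico_add', add_comm 1, add_comm N]
    _ = (∏ k ∈ Finset.Ico (b + 1) N, p k) * ∏ k ∈ Finset.Ico N (b + N), p k :=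
      (Finset.prod_Ico_consecutive p hb (Nat.le_add_left N b)).symm
    _ = ∏ k ∈ (Finset.range N).erase b, p k := by
      rw [hwrap, hsplit, Finset.prod_union hdisj, mul_comm]

lemma sum_range_natCast {K : Type*} [Field K] [CharZero K] (N : ℕ) :
    ∑ k ∈ Finset.range N, (k : K) = N * (N - 1) / 2 := by
  induction N with
  | zero => simp
  | succ n ih =>
    rw [Finset.sum_range_succ, ih]
    push_cast
    ring

end FiniteSum

section Product

variable (g₁ g₂ : ℝ) (z τ : ℂ) {N : ℕ}

lemma im_natCast_mul_pos {τ : ℂ} (hN : N ≠ 0) (hτ : 0 < τ.im) : 0 < (N * τ).im := by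
  rw [← ofReal_natCast, im_ofReal_mul]
  exact mul_pos (Nat.cast_pos.2 (Nat.pos_of_ne_zero hN)) hτ

lemma periodic_thetaChar_natCast_div_add (hN : N ≠ 0) :
    Function.Periodic (fun k : ℕ ↦ thetaChar (k / N + g₁) g₂ z τ) N := fun k ↦ by
  have hN' : (N : ℝ) ≠ 0 := Nat.cast_ne_zero.2 hN
  have h : ((k + N : ℕ) : ℝ) / N + g₁ = k / N + g₁ + (1 : ℤ) := by
    push_cast
    field_simp
    ring
  simp only [h, thetaChar_left_add_intCast]

lemma thetaChar_natCast_div_add_add_natCast_mul (hN : N ≠ 0) (k b : ℕ) :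
    thetaChar (k / N + g₁) g₂ (z + b * τ) (N * τ) =
      exp (-(π * I * b ^ 2 * τ / N) - 2 * π * I * (b / N) * (z + g₂)) *
        thetaChar ((k + b : ℕ) / N + g₁) g₂ z (N * τ) := by
  have hN' : (N : ℂ) ≠ 0 := Nat.cast_ne_zero.2 hN
  have harg : z + b * τ = z + (b / N : ℝ) * (N * τ) := by
    push_cast
    field_simp
  have hchar : (k / N + g₁ + b / N : ℝ) = (k + b : ℕ) / N + g₁ := by
    push_cast
    ring
  rw [harg, thetaChar_add_real_mul_tau, hchar]
  congr 2
  push_cast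
  field_simp

lemma isThetaFunction_prod_thetaChar {τ : ℂ} (hN : N ≠ 0) (hτ : 0 < τ.im) :
    IsThetaFunction (N * g₁ + (N - 1) / 2) g₂ τ
      fun z ↦ ∏ k ∈ Finset.range N, thetaChar (k / N + g₁) g₂ z (N * τ) where
  differentiable := Differentiable.fun_finsetProd fun k _ ↦
    differentiable_thetaChar _ _ (im_natCast_mul_pos hN hτ)
  add_one z := by
    have hN' : (N : ℂ) ≠ 0 := Nat.cast_ne_zero.2 hN
    simp only [thetaChar_add_one, Finset.prod_mul_distrib, ← exp_sum, ← Finset.mul_sum]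
    congr 2
    push_cast
    rw [Finset.sum_add_distrib, ← Finset.sum_div, sum_range_natCast, Finset.sum_const,
      Finset.card_range, nsmul_eq_mul]
    field_simp
    ring
  add_tau z := by
    have hN' : (N : ℂ) ≠ 0 := Nat.cast_ne_zero.2 hN
    have hper := periodic_thetaChar_natCast_div_add g₁ g₂ z (N * τ) hN 0
    have hshift (k : ℕ) := thetaChar_natCast_div_add_add_natCast_mul g₁ g₂ z τ hN k 1
    simp only [Nat.cast_one, one_mul] at hshift
    simp only [hshift, Finset.prod_mul_distrib, Finset.prod_const, Finset.card_range, ← exp_nat_mul]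
    rw [prod_range_add_one_of_eq_mul (e := 1) hN
      (p := fun k : ℕ ↦ thetaChar (k / N + g₁) g₂ z (N * τ)) (by simpa using hper), one_mul]
    congr 2
    field_simp

theorem exists_prod_thetaChar_eq {τ : ℂ} (hN : N ≠ 0) (hτ : 0 < τ.im) :
    ∃ E : ℂ, E ≠ 0 ∧ ∀ z, ∏ k ∈ Finset.range N, thetaChar (k / N + 1 / 2) (1 / 2) z (N * τ) =
      E * thetaChar (1 / 2) (1 / 2) z τ := by
  have hτN := im_natCast_mul_pos hN hτ
  have htheta := (isThetaFunction_prod_thetaChar (1 / 2) (1 / 2) hN hτ).add_intCast (-(N - 1)) 0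
  have hchar : N * (1 / 2) + (N - 1) / 2 + (-(N - 1) : ℤ) = (1 / 2 : ℝ) := by
    push_cast
    ring
  rw [hchar, Int.cast_zero, add_zero] at htheta
  obtain ⟨E, hE⟩ := htheta.exists_eq_const_mul_thetaChar hτ
  refine ⟨E, fun hE0 ↦ ?_, hE⟩
  obtain ⟨z, hz⟩ := exists_prod_ne_zero_of_differentiable (Finset.range N)
    (f := fun k z ↦ thetaChar (k / N + 1 / 2) (1 / 2) z (N * τ))
    (fun k _ ↦ differentiable_thetaChar _ _ hτN) (fun k _ ↦ exists_thetaChar_ne_zero _ _ hτN)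
  exact hz (by rw [hE, hE0, zero_mul])

end Product

section ClearedRatioSum

variable {N : ℕ} {f : ℂ → ℂ}

/-- The sum `∑_{s<N} f (ξ + (ζ + s) / N) / f ((ζ + s) / N)` with denominators cleared by the factor
`∏_{t<N} f ((ζ + t) / N)`, so that it is entire in `ζ` and `ξ` whenever `f` is. -/
noncomputable def clearedRatioSum (N : ℕ) (f : ℂ → ℂ) (ξ ζ : ℂ) : ℂ :=
  ∑ s ∈ Finset.range N, f (ξ + (ζ + s) / N) * ∏ t ∈ (Finset.range N).erase s, f ((ζ + t) / N)

lemma clearedRatioSum_eq_prod_mul_sum {ζ : ℂ} (hf : ∀ s < N, f ((ζ + s) / N) ≠ 0) (ξ : ℂ) :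
    clearedRatioSum N f ξ ζ = (∏ t ∈ Finset.range N, f ((ζ + t) / N)) *
      ∑ s ∈ Finset.range N, f (ξ + (ζ + s) / N) / f ((ζ + s) / N) := by
  rw [clearedRatioSum, Finset.mul_sum]
  refine Finset.sum_congr rfl fun s hs ↦ ?_
  have hs0 := hf s (Finset.mem_range.1 hs)
  rw [← Finset.mul_prod_erase (Finset.range N) (fun t : ℕ ↦ f ((ζ + t) / N)) hs]
  field_simp

lemma clearedRatioSum_zero_right (hN : N ≠ 0) (hf : f 0 = 0) (ξ : ℂ) :
    clearedRatioSum N f ξ 0 = (∏ t ∈ Finset.Ico 1 N, f (t / N)) * f ξ := by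
  have hN0 : 0 ∈ Finset.range N := Finset.mem_range.2 (Nat.pos_of_ne_zero hN)
  have herase : (Finset.range N).erase 0 = Finset.Ico 1 N := by
    ext k
    simp only [Finset.mem_erase, Finset.mem_range, Finset.mem_Ico, Nat.one_le_iff_ne_zero]
  have hvanish (s : ℕ) (hs : s ≠ 0) : ∏ t ∈ (Finset.range N).erase s, f ((0 + t) / N) = 0 :=
    Finset.prod_eq_zero (Finset.mem_erase.2 ⟨hs.symm, hN0⟩) (by simpa using hf)
  rw [clearedRatioSum, Finset.sum_eq_single_of_mem 0 hN0 fun s _ hs ↦ by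
    rw [hvanish s hs, mul_zero], herase, mul_comm]
  simp only [zero_add, Nat.cast_zero, zero_div, add_zero]

lemma differentiable_clearedRatioSum (hf : Differentiable ℂ f) (ζ : ℂ) :
    Differentiable ℂ fun ξ ↦ clearedRatioSum N f ξ ζ := by
  unfold clearedRatioSum
  fun_prop

lemma clearedRatioSum_add_one {e : ℂ} (hf : ∀ z, f (z + 1) = e * f z) (hN : N ≠ 0) (ξ ζ : ℂ) :
    clearedRatioSum N f ξ (ζ + 1) = e * clearedRatioSum N f ξ ζ := by
  have hN' : (N : ℂ) ≠ 0 := Nat.cast_ne_zero.2 hN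
  have hsucc (s : ℕ) : ζ + 1 + s = ζ + (s + 1 : ℕ) := by
    push_cast
    ring
  have hend : (ζ + N) / N = (ζ + (0 : ℕ)) / N + 1 := by
    push_cast
    field_simp
    ring
  simp only [clearedRatioSum, hsucc]
  exact sum_mul_prod_erase_add_one_of_eq_mul (u := fun s : ℕ ↦ f (ξ + (ζ + s) / N))
    (v := fun s : ℕ ↦ f ((ζ + s) / N)) hN (by rw [hend, ← add_assoc, hf]) (by rw [hend, hf])

lemma clearedRatioSum_add_natCast_mul_tau {g : ℝ} {τ : ℂ}
    (hf : ∀ z, f (z + τ) = exp (-(π * I * τ) - 2 * π * I * (z + g)) * f z) (hN : N ≠ 0)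
    (ξ ζ : ℂ) :
    clearedRatioSum N f ξ (ζ + N * τ) =
      exp (-(π * I * (N * τ)) - 2 * π * I * (ξ + ζ + (N * g + (N - 1) / 2 : ℝ))) *
        clearedRatioSum N f ξ ζ := by
  have hN' : (N : ℂ) ≠ 0 := Nat.cast_ne_zero.2 hN
  have harg (t : ℕ) : (ζ + N * τ + t) / N = (ζ + t) / N + τ := by
    field_simp
    ring
  let q (t : ℕ) : ℂ := exp (-(π * I * τ) - 2 * π * I * ((ζ + t) / N + g))
  have hq : exp (-(2 * π * I * ξ)) * ∏ t ∈ Finset.range N, q t =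
      exp (-(π * I * (N * τ)) - 2 * π * I * (ξ + ζ + (N * g + (N - 1) / 2 : ℝ))) := by
    simp only [q, ← exp_sum, ← exp_add, Finset.sum_sub_distrib, ← Finset.mul_sum,
      Finset.sum_add_distrib, ← Finset.sum_div, sum_range_natCast, Finset.sum_const,
      Finset.card_range, nsmul_eq_mul]
    congr 1
    push_cast
    field_simp
    ring
  simp only [clearedRatioSum, Finset.mul_sum, harg, ← add_assoc, hf, Finset.prod_mul_distrib]
  refine Finset.sum_congr rfl fun s hs ↦ ?_
  have hqs : exp (-(π * I * τ) - 2 * π * I * (ξ + (ζ + s) / N + g)) =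
      exp (-(2 * π * I * ξ)) * q s := by
    rw [← exp_add]
    ring_nf
  rw [← hq, hqs, ← Finset.mul_prod_erase _ q hs]
  ring

lemma isThetaFunction_clearedRatioSum {g₁ g₂ : ℝ} {τ : ℂ} (hf : IsThetaFunction g₁ g₂ τ f)
    (hN : N ≠ 0) (ξ : ℂ) :
    IsThetaFunction g₁ (N * g₂ + (N - 1) / 2) (N * τ) fun z ↦ clearedRatioSum N f ξ (z - ξ) where
  differentiable := by
    have := hf.differentiable
    unfold clearedRatioSum
    fun_prop
  add_one z := by rw [add_sub_right_comm, clearedRatioSum_add_one hf.add_one hN]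
  add_tau z := by
    rw [add_sub_right_comm, clearedRatioSum_add_natCast_mul_tau hf.add_tau hN, add_sub_cancel]

end ClearedRatioSum

section Factorization

variable {N : ℕ} {τ : ℂ}

lemma exists_clearedRatioSum_thetaChar_eq_const_mul (hN : N ≠ 0) (hτ : 0 < τ.im) (ξ : ℂ) :
    ∃ C : ℂ, ∀ ζ, clearedRatioSum N (thetaChar (1 / 2) (1 / 2) · τ) ξ ζ =
      C * thetaChar (1 / 2) (1 / 2) (ξ + ζ) (N * τ) := by
  have htheta := (isThetaFunction_clearedRatioSum
    (isThetaFunction_thetaChar (1 / 2) (1 / 2) hτ) hN ξ).add_intCast 0 (-(N - 1))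
  have hchar : N * (1 / 2) + (N - 1) / 2 + (-(N - 1) : ℤ) = (1 / 2 : ℝ) := by
    push_cast
    ring
  rw [hchar, Int.cast_zero, add_zero] at htheta
  obtain ⟨C, hC⟩ := htheta.exists_eq_const_mul_thetaChar (im_natCast_mul_pos hN hτ)
  exact ⟨C, fun ζ ↦ by rw [← hC, add_sub_cancel_left]⟩

theorem exists_clearedRatioSum_thetaChar_eq_mul_prod (hN : N ≠ 0) (hτ : 0 < τ.im) :
    ∃ c : ℂ, ∀ ξ ζ, clearedRatioSum N (thetaChar (1 / 2) (1 / 2) · τ) ξ ζ =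
      c * (thetaChar (1 / 2) (1 / 2) (ξ + ζ) (N * τ) *
        ∏ k ∈ Finset.Ico 1 N, thetaChar (k / N + 1 / 2) (1 / 2) ξ (N * τ)) := by
  have hτN := im_natCast_mul_pos hN hτ
  let A := clearedRatioSum N (thetaChar (1 / 2) (1 / 2) · τ)
  let T (z : ℂ) : ℂ := thetaChar (1 / 2) (1 / 2) z (N * τ)
  let Q (z : ℂ) : ℂ := ∏ k ∈ Finset.Ico 1 N, thetaChar (k / N + 1 / 2) (1 / 2) z (N * τ)
  let K : ℂ := ∏ t ∈ Finset.Ico 1 N, thetaChar (1 / 2) (1 / 2) (t / N) τ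
  obtain ⟨E, hE0, hE⟩ := exists_prod_thetaChar_eq hN hτ
  choose C hC using exists_clearedRatioSum_thetaChar_eq_const_mul hN hτ
  have hTQ (z : ℂ) : T z * Q z = E * thetaChar (1 / 2) (1 / 2) z τ := by
    rw [← hE, Finset.prod_range_eq_mul_Ico _ (Nat.pos_of_ne_zero hN), Nat.cast_zero, zero_div,
      zero_add]
  have hA (z ζ : ℂ) : A z ζ = C z * T (z + ζ) := hC z ζ
  have hA0 (z : ℂ) : K * thetaChar (1 / 2) (1 / 2) z τ = C z * T z := by
    have h := hC z 0
    rwa [clearedRatioSum_zero_right hN (thetaChar_half_half_zero τ), add_zero] at h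
  have hT : Differentiable ℂ T := differentiable_thetaChar _ _ hτN
  have hQ : Differentiable ℂ Q :=
    Differentiable.fun_finsetProd fun k _ ↦ differentiable_thetaChar _ _ hτN
  refine ⟨K / E, fun ξ ζ ↦ ?_⟩
  have hAd : Differentiable ℂ fun z ↦ A z ζ :=
    differentiable_clearedRatioSum (differentiable_thetaChar _ _ hτ) ζ
  have hmul (z : ℂ) : T z * (E * A z ζ - K * (T (z + ζ) * Q z)) = 0 := by
    linear_combination E * T z * hA z ζ - E * T (z + ζ) * hA0 z - K * T (z + ζ) * hTQ z
  have hzero : ∀ z, E * A z ζ - K * (T (z + ζ) * Q z) = 0 :=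
    (eq_zero_or_eq_zero_of_differentiable_of_mul_eq_zero hT (by fun_prop) hmul).resolve_left
      (not_forall.2 (exists_thetaChar_ne_zero _ _ hτN))
  rw [div_mul_eq_mul_div, eq_div_iff hE0, mul_comm]
  exact sub_eq_zero.1 (hzero ξ)

theorem sum_thetaChar_div_thetaChar_eq (hN : N ≠ 0) (hτ : 0 < τ.im) {ζ : ℂ}
    (hζ : ∀ s < N, thetaChar (1 / 2) (1 / 2) ((ζ + s) / N) τ ≠ 0) (ξ : ℂ) :
    ∑ s ∈ Finset.range N, thetaChar (1 / 2) (1 / 2) (ξ + (ζ + s) / N) τ /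
        thetaChar (1 / 2) (1 / 2) ((ζ + s) / N) τ =
      N * (thetaChar (1 / 2) (1 / 2) (ξ + ζ) (N * τ) *
        (∏ k ∈ Finset.Ico 1 N, thetaChar (k / N + 1 / 2) (1 / 2) ξ (N * τ)) /
          (thetaChar (1 / 2) (1 / 2) ζ (N * τ) *
            ∏ k ∈ Finset.Ico 1 N, thetaChar (k / N + 1 / 2) (1 / 2) 0 (N * τ))) := by
  let ϑ (z : ℂ) : ℂ := thetaChar (1 / 2) (1 / 2) z τ
  let P (z : ℂ) : ℂ := thetaChar (1 / 2) (1 / 2) (z + ζ) (N * τ) *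
    ∏ k ∈ Finset.Ico 1 N, thetaChar (k / N + 1 / 2) (1 / 2) z (N * τ)
  let D : ℂ := ∏ s ∈ Finset.range N, ϑ ((ζ + s) / N)
  obtain ⟨c, hc⟩ := exists_clearedRatioSum_thetaChar_eq_mul_prod hN hτ
  have hsum (z : ℂ) :
      c * P z = D * ∑ s ∈ Finset.range N, ϑ (z + (ζ + s) / N) / ϑ ((ζ + s) / N) := by
    rw [← clearedRatioSum_eq_prod_mul_sum hζ]
    exact (hc z ζ).symm
  have hsum0 : c * P 0 = D * N := by
    rw [hsum, Finset.sum_congr rfl fun s hs ↦ by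
      rw [zero_add, div_self (hζ s (Finset.mem_range.1 hs))]]
    simp only [Finset.sum_const, Finset.card_range, nsmul_eq_mul, mul_one]
  have hD : D ≠ 0 := Finset.prod_ne_zero_iff.2 fun s hs ↦ hζ s (Finset.mem_range.1 hs)
  have hP0 : P 0 ≠ 0 := right_ne_zero_of_mul (hsum0 ▸ mul_ne_zero hD (Nat.cast_ne_zero.2 hN))
  have hratio :
      ∑ s ∈ Finset.range N, ϑ (ξ + (ζ + s) / N) / ϑ ((ζ + s) / N) = N * (P ξ / P 0) := by
    rw [← mul_div_assoc, eq_div_iff hP0]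
    refine mul_left_cancel₀ hD ?_
    linear_combination P ξ * hsum0 - P 0 * hsum ξ
  simpa only [P, zero_add] using hratio

end Factorization

section FourierTransform

variable {N b : ℕ}

lemma thetaChar_add_natCast_mul_tau_add_div (g₁ g₂ : ℝ) (N b s : ℕ) (ξ ζ τ : ℂ) :
    thetaChar g₁ g₂ (ξ + b * τ + (ζ + s) / N) τ =
      exp (-(π * I * b ^ 2 * τ) - 2 * π * I * b * (ξ + ζ / N + g₂)) *
        (thetaChar g₁ g₂ (ξ + (ζ + s) / N) τ * exp (2 * π * I / N) ^ (-((b : ℤ) * (s : ℤ)))) := by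
  have h := thetaChar_add_intCast_mul_tau g₁ g₂ b (ξ + (ζ + s) / N) τ
  rw [Int.cast_natCast] at h
  rw [add_right_comm, h, mul_left_comm, mul_comm, ← exp_int_mul, ← exp_add]
  congr 2
  push_cast
  ring

lemma thetaChar_mul_prod_add_natCast_mul_tau (g₁ g₂ : ℝ) (hb : b < N) (ξ ζ τ : ℂ) :
    thetaChar g₁ g₂ (ξ + b * τ + ζ) (N * τ) *
        ∏ k ∈ Finset.Ico 1 N, thetaChar (k / N + g₁) g₂ (ξ + b * τ) (N * τ) =
      exp (-(π * I * b ^ 2 * τ) - 2 * π * I * b * (ξ + ζ / N + g₂)) *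
        (thetaChar (b / N + g₁) g₂ (ξ + ζ) (N * τ) *
          ∏ k ∈ (Finset.range N).erase b, thetaChar (k / N + g₁) g₂ ξ (N * τ)) := by
  have hN : N ≠ 0 := Nat.ne_zero_of_lt hb
  have hN' : (N : ℂ) ≠ 0 := Nat.cast_ne_zero.2 hN
  have hT := thetaChar_natCast_div_add_add_natCast_mul g₁ g₂ (ξ + ζ) τ hN 0 b
  rw [Nat.cast_zero, zero_div, zero_add, zero_add] at hT
  have hexp : exp (-(π * I * b ^ 2 * τ) - 2 * π * I * b * (ξ + ζ / N + g₂)) =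
      exp (-(π * I * b ^ 2 * τ / N) - 2 * π * I * (b / N) * (ξ + ζ + g₂)) *
        exp (-(π * I * b ^ 2 * τ / N) - 2 * π * I * (b / N) * (ξ + g₂)) ^ (N - 1) := by
    rw [← exp_nat_mul, ← exp_add, Nat.cast_pred (Nat.pos_of_ne_zero hN)]
    congr 1
    field_simp
    ring
  simp only [thetaChar_natCast_div_add_add_natCast_mul _ _ _ _ hN, Finset.prod_mul_distrib,
    Finset.prod_const, Nat.card_Ico]
  rw [prod_Ico_one_add_eq_prod_erase hb (periodic_thetaChar_natCast_div_add g₁ g₂ ξ (N * τ) hN),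
    add_right_comm, hT, hexp]
  ring

theorem sum_thetaChar_div_thetaChar_mul_exp_eq {τ : ℂ} (hb : b < N) (hτ : 0 < τ.im) {ζ : ℂ}
    (hζ : ∀ s < N, thetaChar (1 / 2) (1 / 2) ((ζ + s) / N) τ ≠ 0) (ξ : ℂ) :
    ∑ s ∈ Finset.range N, thetaChar (1 / 2) (1 / 2) (ξ + (ζ + s) / N) τ /
        thetaChar (1 / 2) (1 / 2) ((ζ + s) / N) τ *
          exp (2 * π * I / N) ^ (-((b : ℤ) * (s : ℤ))) =
      N * (thetaChar (b / N + 1 / 2) (1 / 2) (ξ + ζ) (N * τ) *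
        (∏ k ∈ (Finset.range N).erase b, thetaChar (k / N + 1 / 2) (1 / 2) ξ (N * τ)) /
          (thetaChar (1 / 2) (1 / 2) ζ (N * τ) *
            ∏ k ∈ Finset.Ico 1 N, thetaChar (k / N + 1 / 2) (1 / 2) 0 (N * τ))) := by
  have h := sum_thetaChar_div_thetaChar_eq (Nat.ne_zero_of_lt hb) hτ hζ (ξ + b * τ)
  simp only [thetaChar_mul_prod_add_natCast_mul_tau _ _ hb,
    thetaChar_add_natCast_mul_tau_add_div, mul_div_assoc _ _ (thetaChar _ _ _ τ),
    ← Finset.mul_sum, mul_left_comm (N : ℂ), mul_div_assoc (exp _)] at h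
  have h' := mul_left_cancel₀ (exp_ne_zero _) h
  simpa only [div_mul_eq_mul_div, mul_div_assoc] using h'

end FourierTransform

theorem stmt6_general (N b : ℕ) (hb : b < N) (τ : ℂ) (hτ : 0 < τ.im) (x : ℝ) (ξ ζ : ℂ)
    (hζ : ∀ s < N, thetaChar (1 / 2 + x) (1 / 2 + s / N) (ζ / N) τ ≠ 0) :
    ∑ s ∈ Finset.range N, thetaChar (1 / 2 + x) (1 / 2 + s / N) (ξ + ζ / N) τ /
        (N * thetaChar (1 / 2 + x) (1 / 2 + s / N) (ζ / N) τ) *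
          exp (2 * π * I / N) ^ (-((b : ℤ) * (s : ℤ))) =
      thetaChar (b / N + 1 / 2 + x) (1 / 2) (ξ + ζ) (N * τ) /
          thetaChar (1 / 2 + x) (1 / 2) ζ (N * τ) *
        (∏ k ∈ (Finset.range N).erase b, thetaChar (k / N + 1 / 2) (1 / 2) ξ (N * τ)) /
          ∏ k ∈ Finset.Icc 1 (N - 1), thetaChar (k / N + 1 / 2) (1 / 2) 0 (N * τ) := by
  have hN : (N : ℂ) ≠ 0 := Nat.cast_ne_zero.2 (Nat.ne_zero_of_lt hb)
  have harg (s : ℕ) : (ζ + x * (N * τ) + s) / N = ζ / N + (s / N : ℝ) + x * τ := by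
    push_cast
    field_simp
    ring
  have hζ' (s : ℕ) (hs : s < N) :
      thetaChar (1 / 2) (1 / 2) ((ζ + x * (N * τ) + s) / N) τ ≠ 0 := by
    rw [harg, thetaChar_add_real_mul_tau, ← thetaChar_right_add]
    exact mul_ne_zero (exp_ne_zero _) (hζ s hs)
  have hterm (s : ℕ) :
      thetaChar (1 / 2) (1 / 2) (ξ + (ζ + x * (N * τ) + s) / N) τ /
          thetaChar (1 / 2) (1 / 2) ((ζ + x * (N * τ) + s) / N) τ =
        exp (-(2 * π * I * x * ξ)) * (thetaChar (1 / 2 + x) (1 / 2 + s / N) (ξ + ζ / N) τ /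
          thetaChar (1 / 2 + x) (1 / 2 + s / N) (ζ / N) τ) := by
    rw [harg, ← add_assoc ξ, thetaChar_div_thetaChar_add_real_mul_tau, thetaChar_right_add,
      thetaChar_right_add, add_assoc]
  have h := sum_thetaChar_div_thetaChar_mul_exp_eq hb hτ hζ' ξ
  simp only [hterm, mul_div_mul_comm, ← add_assoc ξ ζ, thetaChar_div_thetaChar_add_real_mul_tau,
    mul_assoc (exp _), ← Finset.mul_sum, mul_left_comm (N : ℂ)] at h
  have h' := mul_left_cancel₀ (exp_ne_zero _) h
  rw [mul_left_comm] at h'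
  rw [mul_div_assoc (_ / _)]
  refine mul_left_cancel₀ hN (Eq.trans ?_ h')
  rw [Finset.mul_sum]
  refine Finset.sum_congr rfl fun s _ ↦ ?_
  field_simp

/-- The discrete Fourier transform of the Boltzmann weights:
`∑_{s=0}^{N−1} W_{(−a,s)}(ξ,ζ,τ) ω^{−bs}` equals the explicit theta-function product `S^{ab}`,
for all `a, b ∈ {0,…,N−1}`, whenever no denominator vanishes. -/
theorem stmt6 (N : ℕ) (hN : 1 ≤ N) (tau : ℂ) (htau : 0 < tau.im) (xi zeta : ℂ)
    (a b : ℕ) (ha : a < N) (hb : b < N)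
    (hden1 : ∀ s : ℕ, s < N →
      thetaChar (1 / 2 + ((-(a : ℤ) : ℤ) : ℝ) / N) (1 / 2 + (s : ℝ) / N) (zeta / N) tau ≠ 0)
    (hden2 : thetaChar (-(a : ℝ) / N + 1 / 2) (1 / 2) zeta ((N : ℂ) * tau) ≠ 0)
    (hden3 : ∏ k ∈ Finset.Icc 1 (N - 1),
      thetaChar ((k : ℝ) / N + 1 / 2) (1 / 2) 0 ((N : ℂ) * tau) ≠ 0) :
    ∑ s ∈ Finset.range N, Wfun N (-(a : ℤ)) (s : ℤ) xi zeta tau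
        * (Complex.exp (2 * (Real.pi : ℂ) * I / N)) ^ (-((b : ℤ) * (s : ℤ)))
      = thetaChar (((b : ℝ) - (a : ℝ)) / N + 1 / 2) (1 / 2) (xi + zeta) ((N : ℂ) * tau)
          / thetaChar (-(a : ℝ) / N + 1 / 2) (1 / 2) zeta ((N : ℂ) * tau)
        * (∏ k ∈ (Finset.range N).erase b,
            thetaChar ((k : ℝ) / N + 1 / 2) (1 / 2) xi ((N : ℂ) * tau))
        / ∏ k ∈ Finset.Icc 1 (N - 1),
            thetaChar ((k : ℝ) / N + 1 / 2) (1 / 2) 0 ((N : ℂ) * tau) := by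
  have hx : (b : ℝ) / N + 1 / 2 + ((-(a : ℤ) : ℤ) : ℝ) / N = (b - a : ℝ) / N + 1 / 2 := by
    push_cast
    ring
  have hx0 : 1 / 2 + ((-(a : ℤ) : ℤ) : ℝ) / N = -(a : ℝ) / N + 1 / 2 := by
    push_cast
    ring
  simpa only [Wfun, Int.cast_natCast, hx, hx0] using
    stmt6_general N b hb tau htau (((-(a : ℤ) : ℤ) : ℝ) / N) xi zeta hden1
end
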